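/- Let F = ℚ(√(−m)) ⊂ ℂ be an imaginary quadratic field of class number 1 (m > 0 squarefree) with ring of integers 𝓞 = ℤ[ω_{−m}]. Let χ : F^× → {±1} be a group homomorphism with χ(u) = 1 for every unit u of 𝓞, and suppose there exist two non-associated prime elements p, q of 𝓞 with χ(p) = χ(q) = −1. Then for every a ∈ F^× and every t ∈ 𝓞 with a + t ≠ 0, the classes of [a] and [a + t] in RP₊(F)[1/2]_χ are equal. -/

import Mathlib

noncomputable section

open Polynomial

/-- The ring `ℤ[1/2]`, realized as the subring of `ℚ` generated by `1/2`. -/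
def ZhalfSub : Subring ℚ := Subring.closure {(2 : ℚ)⁻¹}

abbrev Zhalf : Type := ZhalfSub

variable (F : Type) [Field F]

/-- The generator `[u]` of the free `ℤ[1/2]`-module on `Fˣ`. -/
def rpGen (u : Fˣ) : Fˣ →₀ Zhalf := Finsupp.single u 1

/-- The defining relations of `RP₊(F)[1/2]_χ`: (i) `[1] = 0`; (ii) the twisted five-term
relations; (iii) `χ(−1)·[x] = [x]`; (iv) `[x] = −[x⁻¹]`. -/
def rpRels (χ : Fˣ →* ℤˣ) : Set (Fˣ →₀ Zhalf) :=
  {v | v = rpGen F 1} ∪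
  {v | ∃ (x y : F) (hx0 : x ≠ 0) (hx1 : x ≠ 1) (hy0 : y ≠ 0) (hy1 : y ≠ 1) (_ : x ≠ y),
      v = rpGen F (Units.mk0 x hx0) - rpGen F (Units.mk0 y hy0)
        + ((χ (Units.mk0 x hx0) : ℤ) : Zhalf) •
            rpGen F (Units.mk0 (y / x) (div_ne_zero hy0 hx0))
        - ((χ (Units.mk0 (x⁻¹ - 1)
              (sub_ne_zero.mpr (fun h => hx1 (inv_eq_one.mp h)))) : ℤ) : Zhalf) •
            rpGen F (Units.mk0 ((1 - x⁻¹) / (1 - y⁻¹))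
              (div_ne_zero (sub_ne_zero.mpr (fun h => hx1 (inv_eq_one.mp h.symm)))
                (sub_ne_zero.mpr (fun h => hy1 (inv_eq_one.mp h.symm)))))
        + ((χ (Units.mk0 (1 - x) (sub_ne_zero.mpr (Ne.symm hx1))) : ℤ) : Zhalf) •
            rpGen F (Units.mk0 ((1 - x) / (1 - y))
              (div_ne_zero (sub_ne_zero.mpr (Ne.symm hx1)) (sub_ne_zero.mpr (Ne.symm hy1))))} ∪
  {v | ∃ u : Fˣ, v = ((χ (-1) : ℤ) : Zhalf) • rpGen F u - rpGen F u} ∪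
  {v | ∃ u : Fˣ, v = rpGen F u + rpGen F u⁻¹}

/-- The submodule of relations. -/
def rpSub (χ : Fˣ →* ℤˣ) : Submodule Zhalf (Fˣ →₀ Zhalf) :=
  Submodule.span Zhalf (rpRels F χ)

/-- The `ℤ[1/2]`-module `RP₊(F)[1/2]_χ`. -/
def RPplus (χ : Fˣ →* ℤˣ) : Type :=
  (Fˣ →₀ Zhalf) ⧸ rpSub F χ

instance (χ : Fˣ →* ℤˣ) : AddCommGroup (RPplus F χ) :=
  inferInstanceAs (AddCommGroup ((Fˣ →₀ Zhalf) ⧸ rpSub F χ))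

instance (χ : Fˣ →* ℤˣ) : Module Zhalf (RPplus F χ) :=
  inferInstanceAs (Module Zhalf ((Fˣ →₀ Zhalf) ⧸ rpSub F χ))

/-- The class `[u]` of `u ∈ F^×` in `RP₊(F)[1/2]_χ`. -/
def rpCls (χ : Fˣ →* ℤˣ) (u : Fˣ) : RPplus F χ :=
  Submodule.Quotient.mk (rpGen F u)

end

noncomputable section

/-- The complex square root of an integer `d` (equal to `i·√(−d)` when `d < 0`). -/
def sqrtC (d : ℤ) : ℂ :=
  if 0 ≤ d then ((Real.sqrt (d : ℝ) : ℝ) : ℂ) else Complex.I * ((Real.sqrt ((-d : ℤ) : ℝ) : ℝ) : ℂ)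

/-- `ω_d ∈ ℂ`: the standard generator of the ring of integers of `ℚ(√d)` for a
squarefree integer `d`, namely `(1 + √d)/2` if `d ≡ 1 (mod 4)` and `√d` otherwise. -/
def omegaQ (d : ℤ) : ℂ :=
  if d % 4 = 1 then (1 + sqrtC d) / 2 else sqrtC d

/-- The ring `ℤ[ω_d] = ℤ + ℤω_d`, as a subring of `ℂ`. -/
def quadRing (d : ℤ) : Subring ℂ := Subring.closure {omegaQ d}

end

noncomputable section

/-- The imaginary quadratic field `ℚ(√d) = ℚ(ω_d)`, as an intermediate field of `ℚ ⊆ ℂ`. -/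
def quadField (d : ℤ) : IntermediateField ℚ ℂ := IntermediateField.adjoin ℚ {omegaQ d}

/-- `ω_d` as an element of `ℚ(√d)`. -/
def omegaK (d : ℤ) : quadField d :=
  ⟨omegaQ d, IntermediateField.subset_adjoin ℚ {omegaQ d} rfl⟩

/-- The ring of integers `𝓞 = ℤ[ω_d] = ℤ + ℤω_d`, as a subring of `ℚ(√d)`. -/
def intRing (d : ℤ) : Subring (quadField d) := Subring.closure {omegaK d}

end

/-!
If `χ (-1) = -1`, the relation `χ (-1) • [x] = [x]` kills every class, since `2` is invertible.
Let `χ (-1) = 1`, and write `f x` for `[x]` and `f 0` for `[2]`.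

The five-term relations at `(x, y)` and at `(1 - x, 1 - y)` give `f x + f (1 - x) = f 0`, whence
`3 • f 0 = 0` by taking `x = 2⁻¹`. The relations at `(x, x ^ 2)` and at `(x, x⁻¹)` then determine
`f` where `χ` is negative: `f x = χ (1 - x) • f 0` if `χ x = -1`. Finally, if `χ s = 1` and
`χ (1 - s) = -1`, the relation at `(s, x)` reduces to `f (x / s) = f x`. Conjugating this scaling
by `x ↦ 1 - x` shows that `1 - s` is a period of `f`, and `s` multiplies periods to periods.

If `χ z = -1`, then `s = 1 + z` or `s = 1 + z⁻¹` is such a scalar, so one of `z` and `z⁻¹` is a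
period and a multiplier. If `z` is integral, it is a multiplier in either case, because an integral
element lies in every ring that contains its inverse, and hence a period, as `z = z * z * z⁻¹`.
Coprime `p`, `q` with `χ p = χ q = -1` satisfy `a * p ^ 2 + b * q ^ 2 = 1`, so every element of
`𝓞` is a sum of products `p ^ 2 * x` and `q ^ 2 * x` with `x` in `𝓞`. These are multipliers: split
`p ^ 2 * x` as `p * (p * x)` if `χ x = 1`. Now `a' * p + b' * q = 1` shows that `1` is a period, and
so is every element of `𝓞`.
-/

theorem mem_subring_of_isIntegral_of_inv_mem {F : Type*} [Field F] {A : Subring F} {z : F}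
    (hz : IsIntegral A z) (hinv : z⁻¹ ∈ A) : z ∈ A := by
  rcases eq_or_ne z 0 with rfl | hz0
  · exact zero_mem A
  have hunit : IsUnit (algebraMap A (integralClosure A F) ⟨z⁻¹, hinv⟩) :=
    IsUnit.of_mul_eq_one ⟨z, hz⟩ (Subtype.ext (inv_mul_cancel₀ hz0))
  obtain ⟨w, hw⟩ := (isUnit_of_map_unit _ _ hunit).exists_right_inv
  have hzw : z⁻¹ * w = 1 := congrArg Subtype.val hw
  rw [(inv_mul_eq_one₀ hz0).1 hzw]
  exact w.2

/-- The additive group of periods of a function on a commutative additive group. -/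
def periodSubgroup {G M : Type*} [AddCommGroup G] (f : G → M) : AddSubgroup G where
  carrier := {t | Function.Periodic f t}
  zero_mem' x := by rw [add_zero]
  add_mem' := Function.Periodic.add_period
  neg_mem' := Function.Periodic.neg

/-- The ring of multipliers of an additive subgroup of a ring, that is, the largest subring over
which the subgroup is a left module. -/
def multiplierRing {R : Type*} [Ring R] (T : AddSubgroup R) : Subring R where
  carrier := {r | ∀ t ∈ T, r * t ∈ T}
  one_mem' t ht := by rwa [one_mul]
  mul_mem' ha hb t ht := by rw [mul_assoc]; exact ha _ (hb t ht)
  zero_mem' t _ := by rw [zero_mul]; exact T.zero_mem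
  add_mem' ha hb t ht := by rw [add_mul]; exact T.add_mem (ha t ht) (hb t ht)
  neg_mem' ha t ht := by rw [neg_mul]; exact T.neg_mem (ha t ht)

theorem ne_zero_of_mulChar_ne_zero {R R' : Type*} [CommMonoidWithZero R] [Nontrivial R]
    [CommMonoidWithZero R'] {k : MulChar R R'} {x : R} (hx : k x ≠ 0) : x ≠ 0 := by
  rintro rfl
  exact hx k.map_zero

theorem mulChar_neg_of_map_neg_one {R R' : Type*} [CommRing R] [CommMonoidWithZero R']
    {k : MulChar R R'} (hk : k (-1) = 1) (x : R) : k (-x) = k x := by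
  rw [neg_eq_neg_one_mul, map_mul, hk, one_mul]

section IntMulChar

variable {F : Type*} [Field F] {k : MulChar F ℤ}

theorem intMulChar_eq_one_or_eq_neg_one {x : F} (hx : x ≠ 0) : k x = 1 ∨ k x = -1 :=
  Int.isUnit_iff.1 ((IsUnit.mk0 x hx).map k)

theorem isQuadratic_intMulChar (k : MulChar F ℤ) : k.IsQuadratic := fun x => by
  rcases eq_or_ne x 0 with rfl | hx
  · exact Or.inl k.map_zero
  · exact Or.inr (intMulChar_eq_one_or_eq_neg_one hx)

theorem intMulChar_inv (x : F) : k x⁻¹ = k x := by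
  rw [← MulChar.inv_apply', (isQuadratic_intMulChar k).inv]

theorem intMulChar_div (x y : F) : k (x / y) = k x * k y := by
  rw [div_eq_mul_inv, map_mul, intMulChar_inv]

theorem intMulChar_inv_sub_one {x : F} (hx : x ≠ 0) : k (x⁻¹ - 1) = k x * k (1 - x) := by
  rw [show x⁻¹ - 1 = (1 - x) / x by field_simp, intMulChar_div, mul_comm]

theorem intMulChar_one_add_eq_one_or_one_add_inv_eq_one (hk : k (-1) = 1) {z : F} (hz : k z = -1) :
    k (1 + z) = 1 ∨ k (1 + z⁻¹) = 1 := by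
  have hz0 : z ≠ 0 := ne_zero_of_mulChar_ne_zero (k := k) (by simp [hz])
  have hadd : 1 + z ≠ 0 := fun e => by
    rw [← neg_eq_of_add_eq_zero_right e, hk] at hz
    norm_num at hz
  refine (intMulChar_eq_one_or_eq_neg_one hadd).imp_right fun hneg => ?_
  rw [show 1 + z⁻¹ = (1 + z) / z by field_simp; ring, intMulChar_div, hneg, hz]
  norm_num

end IntMulChar

/-- The function `f` satisfies the relations of `RP₊(F)[1/2]_χ` in a group without `2`-torsion,
where `χ (-1) = 1` and `k` is the extension of `χ` by zero. The value `f 0`, which does not occur in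
the relations, is chosen so that the identity `f x + f (1 - x) = f 0` holds without exceptions. -/
structure IsTwistedFiveTerm {F M : Type*} [Field F] [AddCommGroup M]
    (k : MulChar F ℤ) (f : F → M) : Prop where
  even : k (-1) = 1
  isSMulRegular_two : IsSMulRegular M (2 : ℕ)
  zero : f 0 = f 2
  one : f 1 = 0
  inv : ∀ x, x ≠ 0 → f x⁻¹ = -f x
  five_term : ∀ x y, x ≠ 0 → x ≠ 1 → y ≠ 0 → y ≠ 1 → x ≠ y →
    f x - f y + k x • f (y / x) - k (x⁻¹ - 1) • f ((1 - x⁻¹) / (1 - y⁻¹))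
      + k (1 - x) • f ((1 - x) / (1 - y)) = 0

namespace IsTwistedFiveTerm

variable {F M : Type*} [Field F] [AddCommGroup M] {k : MulChar F ℤ} {f : F → M}

theorem map_inv_div (h : IsTwistedFiveTerm k f) {x y : F} (hx : x ≠ 0) (hy : y ≠ 0) :
    f (y / x) = -f (x / y) := by
  rw [← h.inv _ (div_ne_zero hx hy), inv_div]

theorem five_term_cross_ratio (h : IsTwistedFiveTerm k f) {x y : F}
    (hx0 : x ≠ 0) (hx1 : x ≠ 1) (hy0 : y ≠ 0) (hy1 : y ≠ 1) (hxy : x ≠ y) :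
    f x - f y + k x • f (y / x) - (k x * k (1 - x)) • f (y * (1 - x) / (x * (1 - y)))
      + k (1 - x) • f ((1 - x) / (1 - y)) = 0 := by
  have hcross : (1 - x⁻¹) / (1 - y⁻¹) = y * (1 - x) / (x * (1 - y)) := by
    have hy : 1 - y⁻¹ ≠ 0 := sub_ne_zero.2 fun e => hy1 (inv_eq_one.1 e.symm)
    have hY : 1 - y ≠ 0 := sub_ne_zero.2 hy1.symm
    rw [div_eq_div_iff hy (mul_ne_zero hx0 hY)]
    field_simp
    ring
  rw [← hcross, ← intMulChar_inv_sub_one hx0]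
  exact h.five_term x y hx0 hx1 hy0 hy1 hxy

theorem add_one_sub_eq_add_one_sub (h : IsTwistedFiveTerm k f) {x y : F}
    (hx0 : x ≠ 0) (hx1 : x ≠ 1) (hy0 : y ≠ 0) (hy1 : y ≠ 1) :
    f x + f (1 - x) = f y + f (1 - y) := by
  rcases eq_or_ne x y with rfl | hxy
  · rfl
  have hX : 1 - x ≠ 0 := sub_ne_zero.2 hx1.symm
  have hY : 1 - y ≠ 0 := sub_ne_zero.2 hy1.symm
  have rel := h.five_term_cross_ratio hx0 hx1 hy0 hy1 hxy
  have rel' := h.five_term_cross_ratio hX (by simpa using hx0) hY (by simpa using hy0)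
    (by simpa using hxy)
  rw [sub_sub_cancel, sub_sub_cancel, h.map_inv_div hX hY, h.map_inv_div hy0 hx0,
    mul_comm (1 - y) x, mul_comm (1 - x) y,
    h.map_inv_div (mul_ne_zero hy0 hX) (mul_ne_zero hx0 hY)] at rel'
  linear_combination (norm := module) rel + rel'

theorem map_neg_one (h : IsTwistedFiveTerm k f) : f (-1) = 0 := by
  have hinv := h.inv (-1) (neg_ne_zero.2 one_ne_zero)
  rw [inv_neg_one] at hinv
  exact h.isSMulRegular_two.right_eq_zero_of_smul
    (by rw [two_nsmul]; exact eq_neg_iff_add_eq_zero.1 hinv)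

variable [NeZero (2 : F)]

theorem add_one_sub (h : IsTwistedFiveTerm k f) (x : F) : f x + f (1 - x) = f 0 := by
  rcases eq_or_ne x 0 with rfl | hx0
  · rw [sub_zero, h.one, add_zero]
  rcases eq_or_ne x 1 with rfl | hx1
  · rw [sub_self, h.one, zero_add]
  have h21 : (2 : F) ≠ 1 := fun e => one_ne_zero (by linear_combination e)
  rw [h.add_one_sub_eq_add_one_sub hx0 hx1 two_ne_zero h21, h.zero,
    show (1 - 2 : F) = -1 by norm_num, h.map_neg_one, add_zero]

theorem three_nsmul_map_zero (h : IsTwistedFiveTerm k f) : 3 • f 0 = 0 := by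
  have hhalf := h.add_one_sub 2⁻¹
  rw [show (1 - 2⁻¹ : F) = 2⁻¹ by field_simp; norm_num, h.inv 2 two_ne_zero, ← h.zero] at hhalf
  linear_combination (norm := module) -hhalf

theorem map_sq_of_map_eq_neg_one (h : IsTwistedFiveTerm k f) {x : F} (hx : k x = -1) :
    f (x ^ 2) = k (1 - x) • f 0 := by
  have hx0 : x ≠ 0 := ne_zero_of_mulChar_ne_zero (k := k) (by simp [hx])
  have hx1 : x ≠ 1 := by rintro rfl; simp at hx
  have hX : 1 - x ≠ 0 := sub_ne_zero.2 hx1.symm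
  have hX' : 1 + x ≠ 0 := fun e => by
    rw [← neg_eq_of_add_eq_zero_right e, h.even] at hx
    norm_num at hx
  have hsq1 : 1 - x ^ 2 = (1 - x) * (1 + x) := by ring
  have rel := h.five_term_cross_ratio hx0 hx1 (pow_ne_zero 2 hx0)
    (sub_ne_zero.1 (hsq1 ▸ mul_ne_zero hX hX')).symm
    (fun e => hx1 (mul_left_cancel₀ hx0 (by linear_combination -e)))
  rw [show x ^ 2 / x = x by field_simp, hsq1,
    show x ^ 2 * (1 - x) / (x * ((1 - x) * (1 + x))) = 1 - (1 + x)⁻¹ by field_simp; ring,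
    show (1 - x) / ((1 - x) * (1 + x)) = (1 + x)⁻¹ by field_simp, hx] at rel
  linear_combination (norm := module) -rel + k (1 - x) • h.add_one_sub (1 + x)⁻¹

theorem map_of_map_eq_neg_one (h : IsTwistedFiveTerm k f) {x : F} (hx : k x = -1) :
    f x = k (1 - x) • f 0 := by
  have hx0 : x ≠ 0 := ne_zero_of_mulChar_ne_zero (k := k) (by simp [hx])
  have hx1 : x ≠ 1 := by rintro rfl; simp at hx
  have hX : 1 - x ≠ 0 := sub_ne_zero.2 hx1.symm
  have hinv : x ≠ x⁻¹ := fun e => by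
    have hsq : x * x = 1 := by nth_rw 2 [e]; exact mul_inv_cancel₀ hx0
    have hneg := (mul_self_eq_one_iff.1 hsq).resolve_left hx1
    rw [hneg, h.even] at hx
    norm_num at hx
  have rel := h.five_term_cross_ratio hx0 hx1 (inv_ne_zero hx0) (inv_ne_one.2 hx1) hinv
  have hneg : 1 - x⁻¹ = -(1 - x) / x := by field_simp; ring
  rw [show x⁻¹ / x = (x ^ 2)⁻¹ by field_simp, h.inv _ (pow_ne_zero 2 hx0), h.inv _ hx0, hneg,
    show x⁻¹ * (1 - x) / (x * (-(1 - x) / x)) = (-x)⁻¹ by field_simp,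
    show (1 - x) / (-(1 - x) / x) = -x by field_simp, h.inv _ (neg_ne_zero.2 hx0),
    h.map_sq_of_map_eq_neg_one hx, hx] at rel
  apply h.isSMulRegular_two
  linear_combination (norm := module) rel - k (1 - x) • h.three_nsmul_map_zero

theorem map_of_map_one_sub_eq_neg_one (h : IsTwistedFiveTerm k f) {x : F}
    (hx : k (1 - x) = -1) : f x = f 0 - k x • f 0 := by
  have hone_sub := h.map_of_map_eq_neg_one hx
  rw [sub_sub_cancel] at hone_sub
  rw [← hone_sub, ← h.add_one_sub x, add_sub_cancel_right]

section Scaling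

variable {s : F}

theorem map_eq_zero_of_map_one_sub (h : IsTwistedFiveTerm k f) (hs : k s = 1)
    (hs' : k (1 - s) = -1) : f s = 0 := by
  rw [h.map_of_map_one_sub_eq_neg_one hs', hs, one_smul, sub_self]

theorem map_div_eq_add_sub (h : IsTwistedFiveTerm k f) (hs : k s = 1)
    (hs' : k (1 - s) = -1) {x : F} (hx0 : x ≠ 0) (hx : k (1 - x) = 1) :
    f (x / s) = f x + k (s - x) • f 0 - f (x * (1 - s) / (s * (1 - x))) := by
  have hs0 : s ≠ 0 := ne_zero_of_mulChar_ne_zero (k := k) (by simp [hs])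
  have hS : 1 - s ≠ 0 := ne_zero_of_mulChar_ne_zero (k := k) (by simp [hs'])
  have hX : 1 - x ≠ 0 := ne_zero_of_mulChar_ne_zero (k := k) (by simp [hx])
  have hsx : s ≠ x := by rintro rfl; simp [hs'] at hx
  have hquot : f ((1 - s) / (1 - x)) = k (s - x) • f 0 := by
    rw [h.map_of_map_eq_neg_one (by rw [intMulChar_div, hs', hx, mul_one]),
      show 1 - (1 - s) / (1 - x) = (s - x) / (1 - x) by field_simp; ring, intMulChar_div, hx,
      mul_one]
  have rel := h.five_term_cross_ratio hs0 (sub_ne_zero.1 hS).symm hx0 (sub_ne_zero.1 hX).symm hsx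
  rw [h.map_eq_zero_of_map_one_sub hs hs', hs, hs', hquot] at rel
  linear_combination (norm := module) rel

theorem map_div_of_map_one_sub_eq_one (h : IsTwistedFiveTerm k f) (hs : k s = 1)
    (hs' : k (1 - s) = -1) {x : F} (hx0 : x ≠ 0) (hx : k (1 - x) = 1) : f (x / s) = f x := by
  have hs0 : s ≠ 0 := ne_zero_of_mulChar_ne_zero (k := k) (by simp [hs])
  have hX : 1 - x ≠ 0 := ne_zero_of_mulChar_ne_zero (k := k) (by simp [hx])
  have hsx : s - x ≠ 0 := sub_ne_zero.2 (by rintro rfl; simp [hs'] at hx)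
  have rel := h.map_div_eq_add_sub hs hs' hx0 hx
  set w := x * (1 - s) / (s * (1 - x)) with hw
  have hkw : k w = -k x := by
    rw [hw, intMulChar_div, map_mul, map_mul, hs, hs', hx]; ring
  have hkw' : k (1 - w) = k (s - x) := by
    rw [show 1 - w = (s - x) / (s * (1 - x)) by rw [hw]; field_simp; ring, intMulChar_div,
      map_mul, hs, hx, mul_one, mul_one]
  rcases intMulChar_eq_one_or_eq_neg_one (k := k) hx0 with hkx | hkx
  · rw [rel, h.map_of_map_eq_neg_one (hkw.trans (by rw [hkx])), hkw', add_sub_cancel_right]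
  have hfx : f x = f 0 := by rw [h.map_of_map_eq_neg_one hkx, hx, one_smul]
  have hdiv : f (x / s) = k (s - x) • f 0 := by
    rw [h.map_of_map_eq_neg_one (by rw [intMulChar_div, hkx, hs, mul_one]),
      show 1 - x / s = (s - x) / s by field_simp, intMulChar_div, hs, mul_one]
  rcases intMulChar_eq_one_or_eq_neg_one (k := k) hsx with hsub | hsub
  · rw [hdiv, hsub, one_smul, hfx]
  · have hfw : f w = 0 := by
      rw [h.map_of_map_one_sub_eq_neg_one (hkw'.trans hsub), hkw, hkx, neg_neg, one_smul, sub_self]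
    rw [hdiv, hfw, hfx, hsub] at rel
    have hzero : f 0 = 0 := by linear_combination (norm := module) -rel
    rw [hdiv, hfx, hzero, smul_zero]

theorem map_div_eq_self (h : IsTwistedFiveTerm k f) (hs : k s = 1) (hs' : k (1 - s) = -1) (x : F) :
    f (x / s) = f x := by
  have hs0 : s ≠ 0 := ne_zero_of_mulChar_ne_zero (k := k) (by simp [hs])
  have hfs := h.map_eq_zero_of_map_one_sub hs hs'
  rcases eq_or_ne x 0 with rfl | hx0
  · rw [zero_div]
  rcases eq_or_ne x 1 with rfl | hx1
  · rw [one_div, h.inv s hs0, hfs, h.one, neg_zero]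
  rcases eq_or_ne x s with rfl | hxs
  · rw [div_self hs0, hfs, h.one]
  have hsub : 1 - x / s ≠ 0 := sub_ne_zero.2 fun e => hxs ((div_eq_one_iff_eq hs0).1 e.symm)
  rcases intMulChar_eq_one_or_eq_neg_one (k := k) (sub_ne_zero.2 hx1.symm) with hx | hx
  · exact h.map_div_of_map_one_sub_eq_one hs hs' hx0 hx
  rcases intMulChar_eq_one_or_eq_neg_one (k := k) hsub with hxs' | hxs'
  · have hsi : k (1 - s⁻¹) = -1 := by
      rw [← neg_sub, mulChar_neg_of_map_neg_one h.even, intMulChar_inv_sub_one hs0, hs, hs',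
        one_mul]
    have hmul := h.map_div_of_map_one_sub_eq_one ((intMulChar_inv s).trans hs) hsi
      (div_ne_zero hx0 hs0) hxs'
    rw [← hmul, div_inv_eq_mul, div_mul_cancel₀ x hs0]
  · rw [h.map_of_map_one_sub_eq_neg_one hx, h.map_of_map_one_sub_eq_neg_one hxs',
      intMulChar_div, hs, mul_one]

theorem periodic_one_sub (h : IsTwistedFiveTerm k f) (hs : k s = 1) (hs' : k (1 - s) = -1) :
    Function.Periodic f (1 - s) := fun x => by
  have hs0 : s ≠ 0 := ne_zero_of_mulChar_ne_zero (k := k) (by simp [hs])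
  calc f (x + (1 - s)) = f 0 - f (s - x) := by
        rw [← h.add_one_sub (s - x), show x + (1 - s) = 1 - (s - x) by ring]; abel
    _ = f 0 - f (1 - x / s) := by
        rw [← h.map_div_eq_self hs hs' (s - x), sub_div, div_self hs0]
    _ = f (x / s) := by rw [← h.add_one_sub (x / s), add_sub_cancel_right]
    _ = f x := h.map_div_eq_self hs hs' x

theorem mem_multiplierRing_of_map_one_sub (h : IsTwistedFiveTerm k f) (hs : k s = 1)
    (hs' : k (1 - s) = -1) : s ∈ multiplierRing (periodSubgroup f) := fun t ht x => by
  have hs0 : s ≠ 0 := ne_zero_of_mulChar_ne_zero (k := k) (by simp [hs])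
  rw [← h.map_div_eq_self hs hs' (x + s * t), add_div, mul_div_cancel_left₀ t hs0, ht,
    h.map_div_eq_self hs hs']

end Scaling

theorem mem_periodSubgroup_of_map_one_add (h : IsTwistedFiveTerm k f) {z : F} (hz : k z = -1)
    (hz' : k (1 + z) = 1) : z ∈ periodSubgroup f := by
  have hneg : 1 - (1 + z) = -z := by ring
  have hmem : 1 - (1 + z) ∈ periodSubgroup f :=
    h.periodic_one_sub hz' (by rw [hneg, mulChar_neg_of_map_neg_one h.even, hz])
  rwa [hneg, neg_mem_iff] at hmem

theorem mem_multiplierRing_of_map_one_add (h : IsTwistedFiveTerm k f) {z : F} (hz : k z = -1)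
    (hz' : k (1 + z) = 1) : z ∈ multiplierRing (periodSubgroup f) := by
  have hmem := h.mem_multiplierRing_of_map_one_sub hz'
    (by rw [show 1 - (1 + z) = -z by ring, mulChar_neg_of_map_neg_one h.even, hz])
  simpa only [add_sub_cancel_left] using sub_mem hmem (one_mem _)

theorem mem_multiplierRing_of_isIntegral (h : IsTwistedFiveTerm k f) {z : F} (hz : k z = -1)
    (hint : IsIntegral ℤ z) : z ∈ multiplierRing (periodSubgroup f) := by
  rcases intMulChar_one_add_eq_one_or_one_add_inv_eq_one h.even hz with hz' | hz'
  · exact h.mem_multiplierRing_of_map_one_add hz hz'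
  · exact mem_subring_of_isIntegral_of_inv_mem hint.tower_top
      (h.mem_multiplierRing_of_map_one_add ((intMulChar_inv z).trans hz) hz')

theorem mem_periodSubgroup_of_isIntegral (h : IsTwistedFiveTerm k f) {z : F} (hz : k z = -1)
    (hint : IsIntegral ℤ z) : z ∈ periodSubgroup f := by
  rcases intMulChar_one_add_eq_one_or_one_add_inv_eq_one h.even hz with hz' | hz'
  · exact h.mem_periodSubgroup_of_map_one_add hz hz'
  have hz0 : z ≠ 0 := ne_zero_of_mulChar_ne_zero (k := k) (by simp [hz])
  have hinv : z⁻¹ ∈ periodSubgroup f :=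
    h.mem_periodSubgroup_of_map_one_add ((intMulChar_inv z).trans hz) hz'
  have hmul : z * (z * z⁻¹) ∈ periodSubgroup f :=
    h.mem_multiplierRing_of_isIntegral hz hint _ (h.mem_multiplierRing_of_isIntegral hz hint _ hinv)
  rwa [mul_inv_cancel₀ hz0, mul_one] at hmul

theorem sq_mul_mem_multiplierRing (h : IsTwistedFiveTerm k f) {q x : F} (hq : k q = -1)
    (hqint : IsIntegral ℤ q) (hxint : IsIntegral ℤ x) :
    q ^ 2 * x ∈ multiplierRing (periodSubgroup f) := by
  have hqmem := h.mem_multiplierRing_of_isIntegral hq hqint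
  rcases eq_or_ne x 0 with rfl | hx0
  · rw [mul_zero]
    exact zero_mem _
  rcases intMulChar_eq_one_or_eq_neg_one (k := k) hx0 with hx | hx
  · rw [pow_two, mul_assoc]
    exact mul_mem hqmem
      (h.mem_multiplierRing_of_isIntegral (by rw [map_mul, hq, hx, mul_one]) (hqint.mul hxint))
  · exact mul_mem (pow_mem hqmem 2) (h.mem_multiplierRing_of_isIntegral hx hxint)

variable {O : Subring F} {p q : O}

theorem le_multiplierRing (h : IsTwistedFiveTerm k f) (hO : O ≤ (integralClosure ℤ F).toSubring)
    (hpq : IsCoprime p q) (hp : k p = -1) (hq : k q = -1) :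
    O ≤ multiplierRing (periodSubgroup f) := fun x hx => by
  obtain ⟨a, b, hab⟩ := hpq.pow (m := 2) (n := 2)
  have hab' : (a * p ^ 2 + b * q ^ 2 : F) = 1 := congrArg Subtype.val hab
  rw [show x = p ^ 2 * (a * x) + q ^ 2 * (b * x) by linear_combination -x * hab']
  exact add_mem (h.sq_mul_mem_multiplierRing hp (hO p.2) (hO (mul_mem a.2 hx)))
    (h.sq_mul_mem_multiplierRing hq (hO q.2) (hO (mul_mem b.2 hx)))

theorem periodic_of_mem (h : IsTwistedFiveTerm k f) (hO : O ≤ (integralClosure ℤ F).toSubring)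
    (hpq : IsCoprime p q) (hp : k p = -1) (hq : k q = -1) {t : F} (ht : t ∈ O) :
    Function.Periodic f t := by
  have hmul := h.le_multiplierRing hO hpq hp hq
  obtain ⟨a, b, hab⟩ := hpq
  have hab' : (a * p + b * q : F) = 1 := congrArg Subtype.val hab
  have hone : (1 : F) ∈ periodSubgroup f := by
    rw [← hab']
    exact add_mem (hmul a.2 _ (h.mem_periodSubgroup_of_isIntegral hp (hO p.2)))
      (hmul b.2 _ (h.mem_periodSubgroup_of_isIntegral hq (hO q.2)))
  have hmem : t * 1 ∈ periodSubgroup f := hmul ht 1 hone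
  rwa [mul_one] at hmem

end IsTwistedFiveTerm

section RPplus

theorem isSMulRegular_two_of_module_Zhalf (M : Type*) [AddCommGroup M] [Module Zhalf M] :
    IsSMulRegular M (2 : ℕ) := by
  let half : Zhalf := ⟨2⁻¹, Subring.subset_closure rfl⟩
  have hhalf : half * 2 = 1 := Subtype.ext (inv_mul_cancel₀ two_ne_zero)
  exact fun v w hvw => (IsUnit.of_mul_eq_one_right half hhalf).isSMulRegular M <| by
    simpa only [ofNat_smul_eq_nsmul] using hvw

variable {F : Type} [Field F] (χ : Fˣ →* ℤˣ)

theorem rpPlus_mk_eq_zero {v : Fˣ →₀ Zhalf} (hv : v ∈ rpRels F χ) :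
    (Submodule.Quotient.mk v : (Fˣ →₀ Zhalf) ⧸ rpSub F χ) = 0 :=
  (Submodule.Quotient.mk_eq_zero _).2 (Submodule.subset_span hv)

theorem rpCls_one : rpCls F χ 1 = 0 :=
  rpPlus_mk_eq_zero χ (Or.inl (Or.inl (Or.inl rfl)))

theorem rpCls_inv (u : Fˣ) : rpCls F χ u⁻¹ = -rpCls F χ u :=
  eq_neg_of_add_eq_zero_right (rpPlus_mk_eq_zero χ (Or.inr ⟨u, rfl⟩))

theorem rpCls_eq_zero_of_map_neg_one (hχ : χ (-1) = -1) (u : Fˣ) : rpCls F χ u = 0 := by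
  have hrel : ((χ (-1) : ℤ) : Zhalf) • rpCls F χ u - rpCls F χ u = 0 :=
    rpPlus_mk_eq_zero χ (Or.inl (Or.inr ⟨u, rfl⟩))
  rw [hχ, Int.cast_smul_eq_zsmul] at hrel
  refine (isSMulRegular_two_of_module_Zhalf (RPplus F χ)).right_eq_zero_of_smul ?_
  rw [Units.val_neg, Units.val_one] at hrel
  linear_combination (norm := module) -hrel

theorem ofUnitHom_apply {x : F} (hx : x ≠ 0) :
    MulChar.ofUnitHom χ x = (χ (Units.mk0 x hx) : ℤ) :=
  MulChar.ofUnitHom_coe χ (Units.mk0 x hx)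

variable [NeZero (2 : F)]

open Classical in
/-- The symbol `[x]` in `RP₊(F)[1/2]_χ` as a function on `F`. Its value at `0` is `[2]`, which is
the common value of the sums `[x] + [1 - x]`. -/
noncomputable def rpSymbol (x : F) : RPplus F χ :=
  if hx : x = 0 then rpCls F χ (Units.mk0 2 two_ne_zero) else rpCls F χ (Units.mk0 x hx)

theorem rpSymbol_apply {x : F} (hx : x ≠ 0) : rpSymbol χ x = rpCls F χ (Units.mk0 x hx) :=
  dif_neg hx

theorem rpSymbol_five_term {x y : F} (hx0 : x ≠ 0) (hx1 : x ≠ 1) (hy0 : y ≠ 0) (hy1 : y ≠ 1)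
    (hxy : x ≠ y) :
    rpSymbol χ x - rpSymbol χ y + MulChar.ofUnitHom χ x • rpSymbol χ (y / x)
      - MulChar.ofUnitHom χ (x⁻¹ - 1) • rpSymbol χ ((1 - x⁻¹) / (1 - y⁻¹))
      + MulChar.ofUnitHom χ (1 - x) • rpSymbol χ ((1 - x) / (1 - y)) = 0 := by
  have hX : 1 - x ≠ 0 := sub_ne_zero.2 hx1.symm
  have hY : 1 - y ≠ 0 := sub_ne_zero.2 hy1.symm
  have hX' : 1 - x⁻¹ ≠ 0 := sub_ne_zero.2 fun e => hx1 (inv_eq_one.1 e.symm)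
  have hY' : 1 - y⁻¹ ≠ 0 := sub_ne_zero.2 fun e => hy1 (inv_eq_one.1 e.symm)
  have hX'' : x⁻¹ - 1 ≠ 0 := sub_ne_zero.2 fun e => hx1 (inv_eq_one.1 e)
  rw [rpSymbol_apply χ hx0, rpSymbol_apply χ hy0, rpSymbol_apply χ (div_ne_zero hy0 hx0),
    rpSymbol_apply χ (div_ne_zero hX' hY'), rpSymbol_apply χ (div_ne_zero hX hY),
    ofUnitHom_apply χ hx0, ofUnitHom_apply χ hX'', ofUnitHom_apply χ hX]
  simp only [← Int.cast_smul_eq_zsmul Zhalf]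
  exact rpPlus_mk_eq_zero χ (Or.inl (Or.inl (Or.inr ⟨x, y, hx0, hx1, hy0, hy1, hxy, rfl⟩)))

theorem isTwistedFiveTerm_rpSymbol (hχ : χ (-1) = 1) :
    IsTwistedFiveTerm (MulChar.ofUnitHom χ) (rpSymbol χ) where
  even := by
    simpa only [Units.val_neg, Units.val_one, hχ] using MulChar.ofUnitHom_coe χ (-1)
  isSMulRegular_two := isSMulRegular_two_of_module_Zhalf (RPplus F χ)
  zero := (dif_pos rfl).trans (rpSymbol_apply χ two_ne_zero).symm
  one := by rw [rpSymbol_apply χ one_ne_zero, Units.mk0_one, rpCls_one]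
  inv x hx := by
    rw [rpSymbol_apply χ hx, rpSymbol_apply χ (inv_ne_zero hx), ← rpCls_inv]
    congr 1
    exact Units.ext (by simp)
  five_term _ _ := rpSymbol_five_term χ

end RPplus

theorem sqrtC_sq (d : ℤ) : sqrtC d ^ 2 = d := by
  unfold sqrtC
  split_ifs with hd
  · rw [← Complex.ofReal_pow, Real.sq_sqrt (by exact_mod_cast hd), Complex.ofReal_intCast]
  · rw [mul_pow, Complex.I_sq, ← Complex.ofReal_pow,
      Real.sq_sqrt (by exact_mod_cast (by omega : (0 : ℤ) ≤ -d))]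
    simp

theorem exists_omegaQ_sq_eq (d : ℤ) : ∃ a b : ℤ, omegaQ d ^ 2 = a * omegaQ d + b := by
  have hs := sqrtC_sq d
  unfold omegaQ
  split_ifs with hd
  · have hd' : (d : ℂ) = 4 * (d / 4 : ℤ) + 1 := by
      exact_mod_cast (by omega : d = 4 * (d / 4) + 1)
    exact ⟨1, d / 4, by push_cast; linear_combination hs / 4 + hd' / 4⟩
  · exact ⟨0, d, by rw [hs]; simp⟩

open Polynomial in
theorem isIntegral_omegaQ (d : ℤ) : IsIntegral ℤ (omegaQ d) := by
  obtain ⟨a, b, hab⟩ := exists_omegaQ_sq_eq d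
  refine ⟨X ^ 2 - (C a * X + C b), monic_X_pow_sub ?_, ?_⟩
  · exact degree_linear_lt
  · simp only [eval₂_sub, eval₂_add, eval₂_mul, eval₂_pow, eval₂_X, eval₂_C, algebraMap_int_eq,
      Int.coe_castRingHom, hab, sub_self]

theorem intRing_le_integralClosure (d : ℤ) :
    intRing d ≤ (integralClosure ℤ (quadField d)).toSubring :=
  Subring.closure_le.2 <| Set.singleton_subset_iff.2 <|
    (isIntegral_algebraMap_iff (B := ℂ) Subtype.val_injective).1 (isIntegral_omegaQ d)

theorem stmt13_general {F : Type} [Field F] [NeZero (2 : F)] (χ : Fˣ →* ℤˣ) {O : Subring F}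
    (hO : O ≤ (integralClosure ℤ F).toSubring) {p q : O} (hpq : IsCoprime p q)
    (hp0 : (p : F) ≠ 0) (hq0 : (q : F) ≠ 0) (hχp : χ (Units.mk0 (p : F) hp0) = -1)
    (hχq : χ (Units.mk0 (q : F) hq0) = -1) (a : Fˣ) (t : O) (hat : (a : F) + t ≠ 0) :
    rpCls F χ a = rpCls F χ (Units.mk0 _ hat) := by
  rcases Int.units_eq_one_or (χ (-1)) with hχ | hχ
  · have hper := (isTwistedFiveTerm_rpSymbol χ hχ).periodic_of_mem hO hpq
      (by rw [ofUnitHom_apply χ hp0, hχp]; rfl) (by rw [ofUnitHom_apply χ hq0, hχq]; rfl) t.2 a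
    rw [rpSymbol_apply χ hat, rpSymbol_apply χ a.ne_zero, Units.mk0_val] at hper
    exact hper.symm
  · rw [rpCls_eq_zero_of_map_neg_one χ hχ, rpCls_eq_zero_of_map_neg_one χ hχ]

/-- Let `F = ℚ(√(−m))` be an imaginary quadratic field of class number `1`
(`m > 0` squarefree) with ring of integers `𝓞 = ℤ[ω_{−m}]`.  Let `χ : F^× → {±1}` be a
homomorphism trivial on the units of `𝓞` with `χ(p) = χ(q) = −1` for two non-associated
primes `p, q` of `𝓞`.  Then `[a] = [a + t]` in `RP₊(F)[1/2]_χ` for every `a ∈ F^×` and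
every `t ∈ 𝓞` with `a + t ≠ 0`. -/
theorem stmt13 (m : ℤ) (hm : 0 < m) (hsq : Squarefree m)
    (hcl : IsPrincipalIdealRing (intRing (-m)))
    (χ : (quadField (-m))ˣ →* ℤˣ)
    (hunits : ∀ u : (intRing (-m))ˣ,
      χ (Units.map (intRing (-m)).subtype.toMonoidHom u) = 1)
    (p q : intRing (-m)) (hp : Prime p) (hq : Prime q) (hpq : ¬ Associated p q)
    (hχp : χ (Units.mk0 ((p : quadField (-m))) (by simpa using hp.ne_zero)) = -1)
    (hχq : χ (Units.mk0 ((q : quadField (-m))) (by simpa using hq.ne_zero)) = -1) :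
    ∀ (a : (quadField (-m))ˣ) (t : intRing (-m)) (hat : (a : quadField (-m)) + t ≠ 0),
      rpCls (quadField (-m)) χ a = rpCls (quadField (-m)) χ (Units.mk0 _ hat) := by
  intro a t hat
  have hcoprime : IsCoprime p q := (hp.irreducible.coprime_iff_not_dvd).2 fun hdvd =>
    hpq (hp.associated_of_dvd hq hdvd)
  exact stmt13_general χ (intRing_le_integralClosure (-m)) hcoprime _ _ hχp hχq a t hat
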